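/- arXiv:1809.07699 — 2 statements merged into one kernel-verified Lean document; each statement's English description precedes it below -/
import Mathlib

section
/- Let p be a prime and let G be a finite p-group of maximal class with |G| = p^n ≥ p^3 and cd(G) = {1, p}. Then cod(G) = {p^i | 0 ≤ i ≤ n-1}. -/
open CategoryTheory

/-- The degree of a complex representation: the dimension of the underlying vector space. -/
noncomputable def repDegree {G : Type} [Group G] (V : FDRep ℂ G) : ℕ :=
  Module.finrank ℂ V

/-- The kernel of a representation of `G`, as a subgroup of `G`. -/
noncomputable def repKer {G : Type} [Group G] (V : FDRep ℂ G) : Subgroup G :=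
  MonoidHom.ker (Representation.asGroupHom V.ρ)

/-- The codegree of a character: `|G : ker χ| / χ(1)`. -/
noncomputable def codegree {G : Type} [Group G] (V : FDRep ℂ G) : ℕ :=
  (repKer V).index / repDegree V

/-- `cod(G)`: the set of codegrees of the irreducible complex characters of `G`. -/
def codSet (G : Type) [Group G] : Set ℕ :=
  {m | ∃ V : FDRep ℂ G, Simple V ∧ codegree V = m}

/-- `cd(G)`: the set of degrees of the irreducible complex characters of `G`. -/
def cdSet (G : Type) [Group G] : Set ℕ :=
  {m | ∃ V : FDRep ℂ G, Simple V ∧ repDegree V = m}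

/-- The nilpotency class of `G`: the least `n` with `upperCentralSeries G n = ⊤`. -/
noncomputable def nilClass (G : Type) [Group G] : ℕ :=
  sInf {n | upperCentralSeries G n = ⊤}

open scoped Classical in
/-- The character of `G` induced from the linear character `lam` of the subgroup `H`. -/
noncomputable def indLinearChar {G : Type} [Group G] [Fintype G] (H : Subgroup G)
    (lam : H →* ℂˣ) : G → ℂ :=
  fun g => (∑ x : G, if h : x * g * x⁻¹ ∈ H then ((lam ⟨x * g * x⁻¹, h⟩ : ℂˣ) : ℂ) else 0) /
    (Nat.card H : ℂ)

/-- A finite group is normally monomial if every irreducible complex character is induced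
from a linear character of a normal subgroup. -/
def NormallyMonomial (G : Type) [Group G] [Fintype G] : Prop :=
  ∀ V : FDRep ℂ G, Simple V → ∃ (H : Subgroup G) (lam : H →* ℂˣ),
    H.Normal ∧ FDRep.character V = indLinearChar H lam

/-!
Write `Z k` for the upper central series and `|G| = p ^ n`. Maximal class forces
`|G : Z k| = p ^ (n - k)` for `k ≤ n - 2`, so that `G ⧸ Z k` has a center of order `p` when
`k ≤ n - 3`. A `p`-group with cyclic center has a faithful irreducible representation: all its
nontrivial normal subgroups share an element `z ≠ 1`, and some irreducible representation does not
kill `z`. Inflating to `G` gives an irreducible representation with kernel `Z k`; it is not linear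
because `G ⧸ Z k` is not abelian, so its degree is `p` and its codegree is `p ^ (n - k - 1)`. The
codegrees `1` and `p` come from linear characters. Conversely a codegree divides `|G|`, and it is
not `|G|` because a faithful irreducible representation of the nonabelian group `G` is not linear.
-/

section Irreducible

open scoped MonoidAlgebra

universe u v

variable {k : Type u} [Field k]

theorem isIrreducible_comp_iff_of_surjective {G H V : Type*} [Monoid G] [Monoid H]
    [AddCommGroup V] [Module k V] (ρ : Representation k H V) {f : G →* H}
    (hf : Function.Surjective f) :
    Representation.IsIrreducible (ρ.comp f) ↔ ρ.IsIrreducible :=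
  OrderIso.isSimpleOrder_iff
    { toFun W := ⟨W.toSubmodule, hf.forall.2 W.apply_mem_toSubmodule⟩
      invFun W := ⟨W.toSubmodule, fun g => W.apply_mem_toSubmodule (f g)⟩
      left_inv _ := rfl
      right_inv _ := rfl
      map_rel_iff' := Iff.rfl }

theorem isIrreducible_of_finrank_eq_one {G V : Type*} [Monoid G] [AddCommGroup V] [Module k V]
    (ρ : Representation k G V) (h : Module.finrank k V = 1) : ρ.IsIrreducible :=
  have : IsSimpleOrder (Submodule k V) := is_simple_module_of_finrank_eq_one h
  { exists_pair_ne := ⟨⊥, ⊤, fun h => bot_ne_top (congrArg Subrepresentation.toSubmodule h)⟩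
    eq_bot_or_eq_top W := (eq_bot_or_eq_top W.toSubmodule).imp
      (fun h => Subrepresentation.toSubmodule_injective h)
      (fun h => Subrepresentation.toSubmodule_injective h) }

theorem commutator_le_ker_of_finrank_eq_one {G V : Type*} [Group G] [AddCommGroup V] [Module k V]
    (ρ : Representation k G V) (h : Module.finrank k V = 1) : commutator G ≤ ρ.ker := by
  have hcomm (f g : Module.End k V) : Commute f g := by
    obtain ⟨c, rfl, -⟩ := LinearMap.existsUnique_eq_smul_id_of_finrank_eq_one h f
    exact (Commute.one_left g).smul_left c
  refine Subgroup.commutator_le.2 fun a _ b _ => ?_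
  rw [← MonoidHom.ker_toHomUnits, MonoidHom.mem_ker, map_commutatorElement,
    commutatorElement_eq_one_iff_commute]
  exact Units.ext (hcomm _ _)

theorem finrank_eq_one_of_commutator_le_ker [IsAlgClosed k] {G V : Type*} [Group G]
    [AddCommGroup V] [Module k V] [FiniteDimensional k V] (ρ : Representation k G V)
    [hρ : ρ.IsIrreducible] (h : commutator G ≤ ρ.ker) : Module.finrank k V = 1 := by
  let σ : Representation k (Abelianization G) V := QuotientGroup.lift _ ρ h
  have : σ.IsIrreducible :=
    (isIrreducible_comp_iff_of_surjective σ (QuotientGroup.mk'_surjective _)).1 hρ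
  exact Representation.IsIrreducible.finrank_eq_one_of_isMulCommutative σ

theorem isIrreducible_ofModule' {G M : Type*} [Monoid G] [AddCommGroup M] [Module k M]
    [Module k[G] M] [IsScalarTower k k[G] M] [IsSimpleModule k[G] M] :
    (Representation.ofModule' (k := k) (G := G) M).IsIrreducible := by
  let ρ := Representation.ofModule' (k := k) (G := G) M
  have hsmul : ρ.asAlgebraHom = Algebra.lsmul k k M :=
    (MonoidAlgebra.lift k _ G).apply_symm_apply _
  let e : ρ.asModule ≃ₗ[k[G]] M := { ρ.asModuleEquiv with map_smul' a x := by simp [hsmul] }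
  exact (Representation.irreducible_iff_isSimpleModule_asModule ρ).2 (IsSimpleModule.congr e)

/-- The morphism in `FDRep k G` given by the inclusion of a subrepresentation of `V`, used to read
off irreducibility of `V.ρ` from categorical simplicity of `V`. -/
noncomputable def subrepInclusion {G : Type v} [Monoid G] {V : FDRep k G}
    (W : Subrepresentation V.ρ) : FDRep.of W.toRepresentation ⟶ V :=
  FDRep.forget₂HomLinearEquiv (FDRep.of W.toRepresentation) V
    (Rep.ofHom ⟨W.toSubmodule.subtype, fun _ => rfl⟩)

theorem isIrreducible_of_simple {G : Type v} [Monoid G] (V : FDRep k G) [Simple V] :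
    Representation.IsIrreducible V.ρ where
  exists_pair_ne := by
    refine ⟨⊥, ⊤, fun h => id_nonzero V ?_⟩
    ext x
    have hx : x ∈ (⊥ : Subrepresentation V.ρ) := h ▸ Submodule.mem_top
    exact hx
  eq_bot_or_eq_top W := by
    have : Mono (subrepInclusion W) :=
      ConcreteCategory.mono_of_injective _ Subtype.val_injective
    by_cases h : subrepInclusion W = 0
    · refine Or.inl (eq_bot_iff.2 fun x hx => ?_)
      exact ConcreteCategory.congr_hom h (⟨x, hx⟩ : W.toSubmodule)
    · have : IsIso (subrepInclusion W) := isIso_of_mono_of_nonzero h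
      refine Or.inr (eq_top_iff.2 fun x _ => ?_)
      obtain ⟨w, rfl⟩ := (ConcreteCategory.bijective_of_isIso (subrepInclusion W)).2 x
      exact w.2

theorem simple_of_isIrreducible {G : Type v} [Monoid G] (V : FDRep k G)
    [hV : Representation.IsIrreducible V.ρ] : Simple V where
  mono_isIso_iff_nonzero {W} f _ := by
    constructor
    · rintro _ rfl
      have hbot : (⊥ : Subrepresentation V.ρ) = ⊤ := by
        refine eq_top_iff.2 fun x _ => ?_
        obtain ⟨w, rfl⟩ := (ConcreteCategory.bijective_of_isIso (0 : W ⟶ V)).2 x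
        exact rfl
      exact bot_ne_top hbot
    · intro hf
      let F := forget₂ (FDRep k G) (Rep k G)
      have : (F.obj V).ρ.IsIrreducible := hV
      have hsurj : Function.Surjective (F.map f).hom :=
        (Representation.IsIrreducible.surjective_or_eq_zero (F.map f).hom).resolve_right
          fun h => hf (F.map_injective (Rep.hom_ext h))
      have : Epi f := F.epi_of_epi_map ((Rep.epi_iff_surjective (F.map f)).2 hsurj)
      exact isIso_of_mono_of_epi f

theorem exists_isIrreducible_apply_ne_one {G : Type u} [Group G] [Finite G]
    [NeZero (Nat.card G : k)] {z : G} (hz : z ≠ 1) :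
    ∃ V : FDRep k G, Representation.IsIrreducible V.ρ ∧ V.ρ z ≠ 1 := by
  have hne : MonoidAlgebra.of k G z - 1 ∉ Module.jacobson k[G] k[G] := by
    rw [IsSemisimpleModule.jacobson_eq_bot, Submodule.mem_bot, sub_eq_zero]
    exact fun h => hz (MonoidAlgebra.of_injective h)
  obtain ⟨I, hI, hzI⟩ :
      ∃ I : Submodule k[G] k[G], IsCoatom I ∧ MonoidAlgebra.of k G z - 1 ∉ I := by
    simpa only [Module.jacobson, Submodule.mem_sInf, Set.mem_ofPred_eq, not_forall,
      exists_prop] using hne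
  have : IsSimpleModule k[G] (k[G] ⧸ I) := isSimpleModule_iff_isCoatom.2 hI
  have : Module.Finite k (k[G] ⧸ I) := .trans k[G] _
  refine ⟨FDRep.of (Representation.ofModule' (k[G] ⧸ I)), isIrreducible_ofModule',
    fun h => hzI ?_⟩
  have hfix : MonoidAlgebra.of k G z • I.mkQ 1 = I.mkQ 1 := LinearMap.congr_fun h (I.mkQ 1)
  rwa [← map_smul, smul_eq_mul, mul_one, ← sub_eq_zero, ← map_sub, ← LinearMap.mem_ker,
    Submodule.ker_mkQ] at hfix

end Irreducible

section PGroup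

universe u

open Subgroup (center)
open scoped commutatorElement

theorem inf_center_ne_bot {G : Type*} [Group G] [Group.IsNilpotent G] {N : Subgroup G} [N.Normal]
    (hN : N ≠ ⊥) : N ⊓ center G ≠ ⊥ := by
  intro h
  have hbot (n : ℕ) : N ⊓ Subgroup.upperCentralSeries G n = ⊥ := by
    induction n with
    | zero => rw [Subgroup.upperCentralSeries_zero, inf_bot_eq]
    | succ n ih =>
      rw [eq_bot_iff, ← h]
      rintro x ⟨hxN, hxZ⟩
      refine ⟨hxN, Subgroup.mem_center_iff.2 fun y => ?_⟩
      have hxyN : ⁅x, y⁆ ∈ N :=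
        N.commutator_le_left ⊤ (Subgroup.commutator_mem_commutator hxN (Subgroup.mem_top y))
      have hxy : ⁅x, y⁆ ∈ N ⊓ Subgroup.upperCentralSeries G n :=
        ⟨hxyN, Subgroup.mem_upperCentralSeries_succ_iff.1 hxZ y⟩
      rw [ih, Subgroup.mem_bot, commutatorElement_eq_one_iff_mul_comm] at hxy
      exact hxy.symm
  obtain ⟨n, hn⟩ := Group.IsNilpotent.nilpotent G
  exact hN (by rw [← hbot n, hn, inf_top_eq])

theorem upperCentralSeries_succ_eq_top_of_commutator_le {G : Type*} [Group G] {k : ℕ}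
    (h : commutator G ≤ Subgroup.upperCentralSeries G k) :
    Subgroup.upperCentralSeries G (k + 1) = ⊤ :=
  eq_top_iff.2 fun _ _ => Subgroup.mem_upperCentralSeries_succ_iff.2 fun _ =>
    h (Subgroup.commutator_mem_commutator (Subgroup.mem_top _) (Subgroup.mem_top _))

theorem index_center_quotient_upperCentralSeries {G : Type*} [Group G] (k : ℕ) :
    (center (G ⧸ Subgroup.upperCentralSeries G k)).index =
      (Subgroup.upperCentralSeries G (k + 1)).index := by
  have hcomap : Subgroup.upperCentralSeries G (k + 1) =
      (center (G ⧸ Subgroup.upperCentralSeries G k)).comap (QuotientGroup.mk' _) :=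
    Subgroup.upperCentralSeriesStep_eq_comap_center (Subgroup.upperCentralSeries G k)
  rw [hcomap, Subgroup.index_comap_of_surjective _ (QuotientGroup.mk'_surjective _)]

theorem card_center_quotient_mul_index_upperCentralSeries_succ {G : Type*} [Group G] (k : ℕ) :
    Nat.card (center (G ⧸ Subgroup.upperCentralSeries G k)) *
      (Subgroup.upperCentralSeries G (k + 1)).index = (Subgroup.upperCentralSeries G k).index := by
  rw [← index_center_quotient_upperCentralSeries, Subgroup.card_mul_index,
    Subgroup.index_eq_card]

variable {p : ℕ} [Fact p.Prime] {G : Type*} [Group G] [Finite G]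

theorem exists_ne_one_forall_mem_of_isCyclic [Nontrivial G] [IsCyclic G] (hG : IsPGroup p G) :
    ∃ z : G, z ≠ 1 ∧ ∀ H : Subgroup G, H ≠ ⊥ → z ∈ H := by
  have hp : p.Prime := Fact.out
  obtain ⟨g, hg⟩ := IsCyclic.exists_ofOrder_eq_natCard (α := G)
  obtain ⟨n, hn0, hn⟩ := hG.nontrivial_iff_card.1 ‹_›
  obtain ⟨m, rfl⟩ := Nat.exists_eq_add_one.2 hn0
  refine ⟨g ^ p ^ m, ?_, fun H hH => ?_⟩
  · refine pow_ne_one_of_lt_orderOf (pow_pos hp.pos m).ne' ?_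
    rw [hg, hn]
    exact Nat.pow_lt_pow_right hp.one_lt m.lt_succ_self
  · have := Subgroup.normal_of_isMulCommutative H
    obtain ⟨a, ha⟩ : p ∣ Nat.card H :=
      (hG.to_subgroup H).card_eq_or_dvd.resolve_left fun h => hH (Subgroup.card_eq_one.1 h)
    obtain ⟨c, hc⟩ : H.index ∣ p ^ m := by
      refine Nat.dvd_of_mul_dvd_mul_right hp.pos ⟨a, ?_⟩
      rw [← pow_succ, ← hn, ← H.card_mul_index, ha]
      ring
    rw [hc, pow_mul]
    exact H.pow_mem (H.pow_index_mem g) c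

theorem exists_ne_one_forall_normal_mem [Nontrivial G] [IsCyclic (center G)]
    (hG : IsPGroup p G) : ∃ z : G, z ≠ 1 ∧ ∀ N : Subgroup G, N.Normal → N ≠ ⊥ → z ∈ N := by
  have := hG.center_nontrivial
  have := hG.isNilpotent
  obtain ⟨z, hz, hmem⟩ := exists_ne_one_forall_mem_of_isCyclic (hG.to_subgroup (center G))
  refine ⟨z, fun h => hz (Subtype.ext h), fun N _ hN => ?_⟩
  have hNZ : N.subgroupOf (center G) ≠ ⊥ := fun h =>
    inf_center_ne_bot hN (Subgroup.subgroupOf_eq_bot.1 h).eq_bot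
  exact Subgroup.mem_subgroupOf.1 (hmem _ hNZ)

theorem exists_normal_index_eq_prime {n : ℕ} (hcard : Nat.card G = p ^ (n + 1)) :
    ∃ N : Subgroup G, N.Normal ∧ N.index = p := by
  have hp : p.Prime := Fact.out
  obtain ⟨N, hN⟩ := Sylow.exists_subgroup_card_pow_prime (G := G) p
    (hcard ▸ pow_dvd_pow p n.le_succ)
  have hindex : N.index = p := by
    have hmul := N.card_mul_index
    rw [hN, hcard, pow_succ] at hmul
    exact Nat.eq_of_mul_eq_mul_left (pow_pos hp.pos n) hmul
  refine ⟨N, Subgroup.normal_of_index_eq_minFac_card ?_, hindex⟩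
  rw [hindex, hcard, hp.pow_minFac n.succ_ne_zero]

theorem sq_dvd_index_center (hG : IsPGroup p G) (h : center G ≠ ⊤) :
    p ^ 2 ∣ (center G).index := by
  obtain ⟨_ | _ | n, hn⟩ := hG.index (center G)
  · exact absurd (Subgroup.index_eq_one.1 hn) h
  · have : IsCyclic (G ⧸ center G) :=
      isCyclic_of_prime_card (p := p) (by rw [← Subgroup.index_eq_card, hn, zero_add, pow_one])
    exact absurd (Subgroup.center_eq_top_iff.2
      (isMulCommutative_of_isCyclic_quotient_center_self G)) h
  · exact hn ▸ pow_dvd_pow p (by omega)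

theorem sq_dvd_index_upperCentralSeries_succ {k : ℕ} (hG : IsPGroup p G)
    (h : Subgroup.upperCentralSeries G (k + 1) ≠ ⊤) :
    p ^ 2 ∣ (Subgroup.upperCentralSeries G (k + 1)).index := by
  rw [← index_center_quotient_upperCentralSeries]
  refine sq_dvd_index_center (hG.to_quotient _) ?_
  rwa [ne_eq, ← Subgroup.index_eq_one, index_center_quotient_upperCentralSeries,
    Subgroup.index_eq_one]

theorem index_upperCentralSeries_succ_mul_dvd {k : ℕ} (hG : IsPGroup p G)
    (h : Subgroup.upperCentralSeries G k ≠ ⊤) :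
    (Subgroup.upperCentralSeries G (k + 1)).index * p ∣
      (Subgroup.upperCentralSeries G k).index := by
  have : Nontrivial (G ⧸ Subgroup.upperCentralSeries G k) := QuotientGroup.nontrivial_iff.2 h
  have hQ := hG.to_quotient (Subgroup.upperCentralSeries G k)
  have := hQ.center_nontrivial
  have hdvd : p ∣ Nat.card (center (G ⧸ Subgroup.upperCentralSeries G k)) :=
    (hQ.to_subgroup _).card_eq_or_dvd.resolve_left Finite.one_lt_card.ne'
  rw [← card_center_quotient_mul_index_upperCentralSeries_succ k, mul_comm]
  exact Nat.mul_dvd_mul_right hdvd _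

theorem index_upperCentralSeries_add_mul_pow_dvd {k j : ℕ} (hG : IsPGroup p G)
    (h : Subgroup.upperCentralSeries G (k + j) ≠ ⊤) :
    (Subgroup.upperCentralSeries G (k + j)).index * p ^ j ∣
      (Subgroup.upperCentralSeries G k).index := by
  induction j with
  | zero => rw [add_zero, pow_zero, mul_one]
  | succ j ih =>
    have hj : Subgroup.upperCentralSeries G (k + j) ≠ ⊤ := fun htop =>
      h (top_le_iff.1 (htop ▸ Subgroup.upperCentralSeries_mono G (by omega)))
    refine dvd_trans ?_ (ih hj)
    rw [pow_succ', ← mul_assoc]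
    exact Nat.mul_dvd_mul_right (index_upperCentralSeries_succ_mul_dvd hG hj) _

theorem index_upperCentralSeries_eq_pow {k j : ℕ} (hcard : Nat.card G = p ^ (k + j + 2))
    (h : Subgroup.upperCentralSeries G (k + j) ≠ ⊤) :
    (Subgroup.upperCentralSeries G k).index = p ^ (j + 2) := by
  have hp : p.Prime := Fact.out
  have hG : IsPGroup p G := .of_card hcard
  have hbot : (Subgroup.upperCentralSeries G 0).index = p ^ (k + j + 2) := by
    rw [Subgroup.upperCentralSeries_zero, Subgroup.index_bot, hcard]
  obtain _ | k := k
  · rwa [zero_add] at hbot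
  rw [Nat.add_right_comm k 1 j] at h hbot
  apply Nat.dvd_antisymm
  · have hk : Subgroup.upperCentralSeries G (0 + (k + 1)) ≠ ⊤ := fun htop =>
      h (top_le_iff.1 (htop ▸ Subgroup.upperCentralSeries_mono G (by omega)))
    have hle := index_upperCentralSeries_add_mul_pow_dvd hG hk
    rw [hbot, zero_add, show k + j + 1 + 2 = j + 2 + (k + 1) by omega, pow_add _ (j + 2)] at hle
    exact Nat.dvd_of_mul_dvd_mul_right (pow_pos hp.pos _) hle
  · have hsq := sq_dvd_index_upperCentralSeries_succ hG h
    rw [← Nat.add_right_comm k 1 j] at h hsq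
    rw [add_comm, pow_add]
    exact (Nat.mul_dvd_mul_right hsq _).trans (index_upperCentralSeries_add_mul_pow_dvd hG h)

theorem card_center_quotient_upperCentralSeries {k j : ℕ}
    (hcard : Nat.card G = p ^ (k + j + 3)) (h : Subgroup.upperCentralSeries G (k + j + 1) ≠ ⊤) :
    Nat.card (center (G ⧸ Subgroup.upperCentralSeries G k)) = p := by
  have hindex : (Subgroup.upperCentralSeries G k).index = p ^ (j + 1 + 2) :=
    index_upperCentralSeries_eq_pow hcard h
  have hindex_succ : (Subgroup.upperCentralSeries G (k + 1)).index = p ^ (j + 2) := by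
    rw [← Nat.add_right_comm k 1 j] at h
    exact index_upperCentralSeries_eq_pow (by rw [hcard]; ring_nf) h
  have hmul := card_center_quotient_mul_index_upperCentralSeries_succ (G := G) k
  rw [hindex, hindex_succ, Nat.add_right_comm j 1 2, pow_succ' p (j + 2)] at hmul
  exact Nat.eq_of_mul_eq_mul_right (pow_pos (Fact.out : p.Prime).pos _) hmul

theorem exists_isIrreducible_ker_eq_bot {k G : Type u} [Field k] [Group G] [Finite G]
    [NeZero (Nat.card G : k)] (hG : IsPGroup p G) [IsCyclic (center G)] :
    ∃ V : FDRep k G, Representation.IsIrreducible V.ρ ∧ V.ρ.ker = ⊥ := by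
  obtain _ | _ := subsingleton_or_nontrivial G
  · exact ⟨FDRep.of (Representation.trivial k G k),
      isIrreducible_of_finrank_eq_one _ (Module.finrank_self k), Subsingleton.elim _ _⟩
  · obtain ⟨z, hz, hmem⟩ := exists_ne_one_forall_normal_mem hG
    obtain ⟨V, hV, hVz⟩ := exists_isIrreducible_apply_ne_one (k := k) hz
    exact ⟨V, hV, by_contra fun hker => hVz (hmem _ inferInstance hker)⟩

end PGroup

section Codegree

variable {G : Type} [Group G]

theorem repKer_eq_ker (V : FDRep ℂ G) : repKer V = V.ρ.ker :=
  MonoidHom.ker_toHomUnits V.ρ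

theorem commutator_le_repKer_of_repDegree_eq_one {V : FDRep ℂ G} (h : repDegree V = 1) :
    commutator G ≤ repKer V :=
  repKer_eq_ker V ▸ commutator_le_ker_of_finrank_eq_one V.ρ h

theorem repDegree_eq_one_of_commutator_le_repKer {V : FDRep ℂ G} [Simple V]
    (h : commutator G ≤ repKer V) : repDegree V = 1 :=
  have := isIrreducible_of_simple V
  finrank_eq_one_of_commutator_le_ker V.ρ (repKer_eq_ker V ▸ h)

theorem one_mem_codSet : 1 ∈ codSet G := by
  let V : FDRep ℂ G := FDRep.of (Representation.trivial ℂ G ℂ)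
  have hdeg : repDegree V = 1 := Module.finrank_self ℂ
  have : Representation.IsIrreducible V.ρ := isIrreducible_of_finrank_eq_one V.ρ hdeg
  have hker : repKer V = ⊤ := (repKer_eq_ker V).trans (eq_top_iff.2 fun _ _ => rfl)
  exact ⟨V, simple_of_isIrreducible V, by rw [codegree, hker, hdeg, Subgroup.index_top]⟩

variable {p : ℕ} [Fact p.Prime]

theorem repDegree_dvd_index_repKer (hG : IsPGroup p G) {V : FDRep ℂ G} [Simple V]
    (hdeg : repDegree V = 1 ∨ repDegree V = p) : repDegree V ∣ (repKer V).index := by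
  obtain h | h := hdeg
  · exact h ▸ one_dvd _
  · rw [h]
    have : (repKer V).Normal := repKer_eq_ker V ▸ inferInstance
    refine (hG.to_quotient (repKer V)).card_eq_or_dvd.resolve_left fun hindex => ?_
    have hdeg_one : repDegree V = 1 :=
      repDegree_eq_one_of_commutator_le_repKer (Subgroup.index_eq_one.1 hindex ▸ le_top)
    exact (Fact.out : p.Prime).one_lt.ne (hdeg_one ▸ h)

theorem codegree_dvd_card (hG : IsPGroup p G) {V : FDRep ℂ G} [Simple V]
    (hdeg : repDegree V = 1 ∨ repDegree V = p) : codegree V ∣ Nat.card G :=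
  (Nat.div_dvd_of_dvd (repDegree_dvd_index_repKer hG hdeg)).trans (repKer V).index_dvd_card

variable [Finite G]

theorem codegree_lt_card (hG : commutator G ≠ ⊥) (V : FDRep ℂ G) : codegree V < Nat.card G := by
  have hle : (repKer V).index ≤ Nat.card G := Nat.le_of_dvd Nat.card_pos (repKer V).index_dvd_card
  obtain h | h | h : repDegree V = 0 ∨ repDegree V = 1 ∨ 1 < repDegree V := by omega
  · rw [codegree, h, Nat.div_zero]
    exact Nat.card_pos
  · rw [codegree, h, Nat.div_one]
    refine hle.lt_of_ne fun heq => hG ?_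
    have hker : Nat.card (repKer V) = 1 := Nat.eq_of_mul_eq_mul_right Nat.card_pos <| by
      rw [one_mul, ← heq, Subgroup.card_mul_index, heq]
    exact eq_bot_iff.2 (Subgroup.card_eq_one.1 hker ▸ commutator_le_repKer_of_repDegree_eq_one h)
  · exact (Nat.div_lt_self (Nat.pos_of_ne_zero Subgroup.index_ne_zero_of_finite) h).trans_le hle

theorem exists_simple_repKer_eq (hG : IsPGroup p G) (N : Subgroup G) [N.Normal]
    [IsCyclic (Subgroup.center (G ⧸ N))] : ∃ V : FDRep ℂ G, Simple V ∧ repKer V = N := by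
  obtain ⟨V, hV, hker⟩ := exists_isIrreducible_ker_eq_bot (k := ℂ) (hG.to_quotient N)
  let W : FDRep ℂ G := FDRep.of (V.ρ.comp (QuotientGroup.mk' N))
  have : Representation.IsIrreducible W.ρ :=
    (isIrreducible_comp_iff_of_surjective V.ρ (QuotientGroup.mk'_surjective N)).2 hV
  refine ⟨W, simple_of_isIrreducible W, ?_⟩
  rw [repKer_eq_ker, FDRep.of_ρ', ← MonoidHom.comap_ker, hker, MonoidHom.comap_bot,
    QuotientGroup.ker_mk']

theorem index_mem_codSet_of_isCyclic_quotient (hG : IsPGroup p G) (N : Subgroup G) [N.Normal]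
    [IsCyclic (G ⧸ N)] : N.index ∈ codSet G := by
  obtain ⟨V, hV, hker⟩ := exists_simple_repKer_eq hG N
  have hdeg : repDegree V = 1 := repDegree_eq_one_of_commutator_le_repKer <|
    hker ▸ Subgroup.Normal.quotient_commutative_iff_commutator_le.1 inferInstance
  exact ⟨V, hV, by rw [codegree, hker, hdeg, Nat.div_one]⟩

theorem prime_mem_codSet {n : ℕ} (hcard : Nat.card G = p ^ (n + 1)) : p ∈ codSet G := by
  obtain ⟨N, _, hN⟩ := exists_normal_index_eq_prime hcard
  have : IsCyclic (G ⧸ N) := isCyclic_of_prime_card (N.index_eq_card ▸ hN)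
  exact hN ▸ index_mem_codSet_of_isCyclic_quotient (.of_card hcard) N

theorem pow_mem_codSet_of_cdSet_subset {k j : ℕ} (hcard : Nat.card G = p ^ (k + j + 3))
    (hZ : Subgroup.upperCentralSeries G (k + j + 1) ≠ ⊤) (hcd : cdSet G ⊆ {1, p}) :
    p ^ (j + 2) ∈ codSet G := by
  have : IsCyclic (Subgroup.center (G ⧸ Subgroup.upperCentralSeries G k)) :=
    isCyclic_of_prime_card (card_center_quotient_upperCentralSeries hcard hZ)
  obtain ⟨V, hV, hker⟩ :=
    exists_simple_repKer_eq (.of_card hcard) (Subgroup.upperCentralSeries G k)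
  have hdeg_ne : repDegree V ≠ 1 := fun h => by
    have htop := upperCentralSeries_succ_eq_top_of_commutator_le
      (hker ▸ commutator_le_repKer_of_repDegree_eq_one h)
    exact hZ (top_le_iff.1 (htop ▸ Subgroup.upperCentralSeries_mono G (by omega)))
  have hdeg : repDegree V = p := (hcd ⟨V, hV, rfl⟩).resolve_left hdeg_ne
  have hindex : (repKer V).index = p ^ (j + 1 + 2) :=
    hker ▸ index_upperCentralSeries_eq_pow hcard hZ
  refine ⟨V, hV, ?_⟩
  rw [codegree, hindex, hdeg, Nat.add_right_comm j 1 2, pow_succ]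
  exact Nat.mul_div_cancel _ (Fact.out : p.Prime).pos

end Codegree

/-- A maximal class `p`-group of order `p^n ≥ p^3` with `cd(G) = {1, p}` has
`cod(G) = {p^i | 0 ≤ i ≤ n-1}`. -/
theorem maximal_class_two_degrees_full_codegrees (p n : ℕ) (hp : p.Prime) (G : Type) [Group G]
    [Fintype G] (hcard : Fintype.card G = p ^ n) (hn : 3 ≤ n) (hmax : nilClass G = n - 1)
    (hcd : cdSet G = {1, p}) :
    codSet G = {m | ∃ i ≤ n - 1, m = p ^ i} := by
  have : Fact p.Prime := ⟨hp⟩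
  rw [← Nat.card_eq_fintype_card] at hcard
  have hG : IsPGroup p G := .of_card hcard
  have hZ {k : ℕ} (hk : k < n - 1) : Subgroup.upperCentralSeries G k ≠ ⊤ := fun h =>
    (hmax ▸ hk).not_ge (Nat.sInf_le h)
  have hcomm : commutator G ≠ ⊥ := fun h =>
    hZ (by omega) (upperCentralSeries_succ_eq_top_of_commutator_le (k := 0) h.le)
  ext m
  constructor
  · rintro ⟨V, hV, rfl⟩
    have hdvd : codegree V ∣ p ^ n := hcard ▸ codegree_dvd_card hG (hcd.subset ⟨V, hV, rfl⟩)
    obtain ⟨i, -, hi⟩ := (Nat.dvd_prime_pow hp).1 hdvd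
    have hlt : p ^ i < p ^ n := hi ▸ hcard ▸ codegree_lt_card hcomm V
    exact ⟨i, Nat.le_sub_one_of_lt ((Nat.pow_lt_pow_iff_right hp.one_lt).1 hlt), hi⟩
  · rintro ⟨_ | _ | j, hj, rfl⟩
    · simpa using one_mem_codSet (G := G)
    · obtain ⟨n, rfl⟩ := Nat.exists_eq_add_one.2 (by omega : 0 < n)
      simpa using prime_mem_codSet hcard
    · obtain ⟨k, rfl⟩ := Nat.exists_eq_add_of_le' (by omega : j + 3 ≤ n)
      exact pow_mem_codSet_of_cdSet_subset (by rw [hcard, add_assoc]) (hZ (by omega)) hcd.subset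
end

section
/- Let p be a prime and let G be a finite p-group of maximal class with |G| = p^n ≥ p^3. If p^{n-1} ∈ cod(G), then cd(G) = {1, p}; equivalently, if cd(G) ≠ {1, p}, then every irreducible complex character of G has codegree at most p^{n-2}. -/
open CategoryTheory

/-! If `z` is central modulo the center `Z(ρ)` of an irreducible representation `ρ` of `G`, then
`ρ z` commutes with `ρ` up to a linear character `χ`, so that `G` permutes the eigenspaces of `ρ z`
and each of them is an irreducible representation of `ker χ` of degree `ρ(1) / |G : ker χ|`.
Induction on the degree shows that nilpotent groups are monomial.

Let `G` be a nonabelian `p`-group of order `p ^ n` and let `ψ` be an irreducible character of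
codegree larger than `p ^ (n - 2)`, so that `ψ(1) |ker ψ| < p ^ 2`. If `ψ` were linear, then its
kernel would have order at most `p`, hence be central with cyclic quotient, and `G` would be
abelian. Thus `ψ` is faithful of degree `p`. The subgroup it is induced from has index `p`, so it is
normal, and faithfulness makes it abelian; an abelian subgroup of index `p` bounds all degrees by
`p`. -/

open Module
open scoped commutatorElement

section LinearAlgebra

variable {ι K V : Type*} [Fintype ι] [DivisionRing K] [AddCommGroup V] [Module K V]

theorem finrank_iSup_le_sum (W : ι → Submodule K V) [∀ i, FiniteDimensional K (W i)] :
    finrank K ↥(⨆ i, W i) ≤ ∑ i, finrank K (W i) := by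
  classical
  rw [Submodule.iSup_eq_range_dfinsupp_lsum, ← finrank_directSum]
  exact LinearMap.finrank_range_le _

theorem sum_finrank_le_of_iSupIndep [FiniteDimensional K V] {W : ι → Submodule K V}
    (hW : iSupIndep W) :
    ∑ i, finrank K (W i) ≤ finrank K V := by
  classical
  rw [← finrank_directSum]
  exact LinearMap.finrank_le_finrank_of_injective hW.dfinsupp_lsum_injective

theorem iSupIndep_eigenspace_units_mul {k V : Type*} [Field k] [AddCommGroup V] [Module k V]
    (f : End k V) (S : Subgroup kˣ) {μ : k} (hμ : μ ≠ 0) :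
    iSupIndep fun ζ : S ↦ f.eigenspace ((ζ : kˣ) * μ) :=
  f.eigenspaces_iSupIndep.comp fun _ _ h ↦ Subtype.ext (Units.ext (mul_right_cancel₀ hμ h))

end LinearAlgebra

section Irreducible

variable {k G V : Type*} [Field k] [Group G] [AddCommGroup V] [Module k V]
  {ρ : Representation k G V}

theorem nontrivial_of_isIrreducible (ρ : Representation k G V) [ρ.IsIrreducible] :
    Nontrivial V := by
  by_contra h
  rw [not_nontrivial_iff_subsingleton] at h
  exact bot_ne_top (α := Subrepresentation ρ)
    (Subrepresentation.toSubmodule_injective (Subsingleton.elim _ _))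

theorem subrepresentation_ne_bot_iff {W : Subrepresentation ρ} :
    W ≠ ⊥ ↔ ∃ v ∈ W, v ≠ 0 :=
  Subrepresentation.toSubmodule_injective.ne_iff.symm.trans (Submodule.ne_bot_iff _)

theorem eq_top_of_mem_of_ne_zero [ρ.IsIrreducible] {W : Subrepresentation ρ} {v : V}
    (hv : v ∈ W) (hv0 : v ≠ 0) : W = ⊤ :=
  (eq_bot_or_eq_top W).resolve_left (subrepresentation_ne_bot_iff.mpr ⟨v, hv, hv0⟩)

theorem isIrreducible_of_isAtom {U : Subrepresentation ρ} (hU : IsAtom U) :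
    U.toRepresentation.IsIrreducible where
  exists_pair_ne := by
    obtain ⟨v, hv, hv0⟩ := subrepresentation_ne_bot_iff.mp hU.1
    exact ⟨⊤, ⊥, subrepresentation_ne_bot_iff.mpr ⟨⟨v, hv⟩, trivial, by simpa using hv0⟩⟩
  eq_bot_or_eq_top W := by
    let W' : Subrepresentation ρ :=
      { toSubmodule := W.toSubmodule.map U.toSubmodule.subtype
        apply_mem_toSubmodule := by
          rintro g _ ⟨w, hw, rfl⟩
          exact ⟨_, W.apply_mem_toSubmodule g hw, rfl⟩ }
    refine or_iff_not_imp_left.mpr fun hW ↦ top_le_iff.mp fun u _ ↦ ?_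
    obtain ⟨w, hw, hw0⟩ := subrepresentation_ne_bot_iff.mp hW
    have hW' : W' ≠ ⊥ := subrepresentation_ne_bot_iff.mpr ⟨w, ⟨w, hw, rfl⟩, by simpa using hw0⟩
    have le : U ≤ W' := (isAtom_iff_le_of_ge.mp hU).2 W' hW' (Submodule.map_subtype_le _ _)
    obtain ⟨u', hu', h⟩ := le u.2
    exact Subtype.ext h ▸ hu'

variable [FiniteDimensional k V]

theorem exists_isAtom_subrepresentation [Nontrivial V] : ∃ U : Subrepresentation ρ, IsAtom U := by
  have : WellFoundedLT (Subrepresentation ρ) :=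
    StrictMono.wellFoundedLT (f := Subrepresentation.toSubmodule) fun _ _ h ↦ h
  have : IsAtomic (Subrepresentation ρ) := isAtomic_of_orderBot_wellFounded_lt wellFounded_lt
  obtain ⟨v, hv⟩ := exists_ne (0 : V)
  have : Nontrivial (Subrepresentation ρ) :=
    ⟨⊤, ⊥, subrepresentation_ne_bot_iff.mpr ⟨v, trivial, hv⟩⟩
  exact IsAtomic.exists_atom _

theorem finrank_le_index_mul_finrank [ρ.IsIrreducible] {H : Subgroup G} [H.FiniteIndex]
    (U : Subrepresentation (ρ.comp H.subtype)) (hU : U ≠ ⊥) :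
    finrank k V ≤ H.index * finrank k U.toSubmodule := by
  have := H.fintypeQuotientOfFiniteIndex
  let W : G ⧸ H → Submodule k V := fun q ↦ U.toSubmodule.map (ρ q.out)
  have map_le (g : G) : U.toSubmodule.map (ρ g) ≤ W g := by
    obtain ⟨h, hh⟩ := QuotientGroup.mk_out_eq_mul H g
    rintro _ ⟨u, hu, rfl⟩
    refine ⟨ρ h⁻¹ u, U.apply_mem_toSubmodule h⁻¹ hu, ?_⟩
    simp [hh, ← End.mul_apply, ← map_mul]
  have stable (g : G) : ⨆ q, W q ≤ (⨆ q, W q).comap (ρ g) := by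
    refine iSup_le fun q ↦ ?_
    rw [← Submodule.map_le_iff_le_comap, ← Submodule.map_comp, ← End.mul_eq_comp, ← map_mul]
    exact (map_le _).trans (le_iSup W _)
  have span : ⨆ q, W q = ⊤ := by
    obtain ⟨u, hu, hu0⟩ := subrepresentation_ne_bot_iff.mp hU
    have mem : u ∈ ⨆ q, W q := le_iSup W _ (map_le 1 ⟨u, hu, by simp⟩)
    exact congrArg Subrepresentation.toSubmodule
      (eq_top_of_mem_of_ne_zero (W := (⟨⨆ q, W q, stable⟩ : Subrepresentation ρ)) mem hu0)
  calc finrank k V = finrank k ↥(⨆ q, W q) := by rw [span, finrank_top]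
    _ ≤ ∑ q, finrank k (W q) := finrank_iSup_le_sum W
    _ ≤ ∑ _q : G ⧸ H, finrank k U.toSubmodule :=
      Finset.sum_le_sum fun q _ ↦ Submodule.finrank_map_le _ _
    _ = H.index * finrank k U.toSubmodule := by
      simp [Subgroup.index_eq_card, Nat.card_eq_fintype_card]

variable [IsAlgClosed k]

theorem finrank_le_index_of_isMulCommutative (ρ : Representation k G V) [ρ.IsIrreducible]
    (H : Subgroup G) [IsMulCommutative H] [H.FiniteIndex] : finrank k V ≤ H.index := by
  have := nontrivial_of_isIrreducible ρ
  obtain ⟨U, hU⟩ := exists_isAtom_subrepresentation (ρ := ρ.comp H.subtype)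
  have := isIrreducible_of_isAtom hU
  have := finrank_le_index_mul_finrank U hU.1
  rwa [Representation.IsIrreducible.finrank_eq_one_of_isMulCommutative U.toRepresentation,
    mul_one] at this

end Irreducible

section TwistIntertwiner

variable {k G V : Type*} [Field k] [Group G] [AddCommGroup V] [Module k V]
  {ρ : Representation k G V} {f : End k V} {χ : G →* kˣ}

/-- `f` is an intertwiner from `ρ` to its twist `χ ⊗ ρ` by a linear character `χ`. -/
def IsTwistIntertwiner (ρ : Representation k G V) (f : End k V) (χ : G →* kˣ) : Prop :=
  ∀ g v, f (ρ g v) = (χ g : k) • ρ g (f v)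

namespace IsTwistIntertwiner

theorem apply_mem_eigenspace (hf : IsTwistIntertwiner ρ f χ) {μ : k} (g : G) {v : V}
    (hv : v ∈ f.eigenspace μ) : ρ g v ∈ f.eigenspace (χ g * μ) := by
  rw [End.mem_eigenspace_iff] at hv ⊢
  rw [hf, hv, map_smul, smul_smul]

/-- The eigenspace of a twist intertwiner, as a subrepresentation of the restriction of `ρ` to
`ker χ`. -/
def eigenspaceSubrep (hf : IsTwistIntertwiner ρ f χ) (μ : k) :
    Subrepresentation (ρ.comp χ.ker.subtype) where
  toSubmodule := f.eigenspace μ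
  apply_mem_toSubmodule g v hv := by
    simpa [MonoidHom.mem_ker.mp g.2] using hf.apply_mem_eigenspace (g : G) hv

variable {μ : k}

theorem eigenspaceSubrep_ne_bot (hf : IsTwistIntertwiner ρ f χ) (hμ : f.HasEigenvalue μ) :
    hf.eigenspaceSubrep μ ≠ ⊥ :=
  Subrepresentation.toSubmodule_injective.ne_iff.mp hμ

variable [FiniteDimensional k V]

theorem finite_range (hf : IsTwistIntertwiner ρ f χ)
    (hμ : f.HasEigenvalue μ) (hμ0 : μ ≠ 0) : Finite χ.range := by
  have eigenvalue (ζ : χ.range) : f.HasEigenvalue ((ζ : kˣ) * μ) := by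
    obtain ⟨_, g, rfl⟩ := ζ
    obtain ⟨v, hv, hv0⟩ := hμ.exists_hasEigenvector
    exact End.hasEigenvalue_of_hasEigenvector (x := ρ g v) ⟨hf.apply_mem_eigenspace g hv,
      (map_ne_zero_iff _ (ρ.apply_bijective g).1).mpr hv0⟩
  exact WellFoundedGT.finite_of_iSupIndep (iSupIndep_eigenspace_units_mul f χ.range hμ0) eigenvalue

theorem index_ker_mul_finrank_eigenspace_le (hf : IsTwistIntertwiner ρ f χ)
    (hμ : f.HasEigenvalue μ) (hμ0 : μ ≠ 0) :
    χ.ker.index * finrank k (f.eigenspace μ) ≤ finrank k V := by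
  have := hf.finite_range hμ hμ0
  have := Fintype.ofFinite χ.range
  have finrank_le (ζ : χ.range) :
      finrank k (f.eigenspace μ) ≤ finrank k (f.eigenspace ((ζ : kˣ) * μ)) := by
    obtain ⟨_, g, rfl⟩ := ζ
    refine LinearMap.finrank_le_finrank_of_injective
      (f := (ρ g).restrict fun v hv ↦ hf.apply_mem_eigenspace g hv) ?_
    exact fun v w h ↦ Subtype.ext ((ρ.apply_bijective g).1 (congrArg Subtype.val h))
  calc χ.ker.index * finrank k (f.eigenspace μ)
      = ∑ _ζ : χ.range, finrank k (f.eigenspace μ) := by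
        rw [Subgroup.index_ker, Nat.card_eq_fintype_card, Finset.sum_const, Finset.card_univ,
          smul_eq_mul]
    _ ≤ ∑ ζ : χ.range, finrank k (f.eigenspace ((ζ : kˣ) * μ)) :=
        Finset.sum_le_sum fun ζ _ ↦ finrank_le ζ
    _ ≤ finrank k V := sum_finrank_le_of_iSupIndep (iSupIndep_eigenspace_units_mul f χ.range hμ0)

variable [ρ.IsIrreducible]

theorem index_ker_mul_finrank_eigenspace (hf : IsTwistIntertwiner ρ f χ)
    (hμ : f.HasEigenvalue μ) (hμ0 : μ ≠ 0) :
    χ.ker.index * finrank k (f.eigenspace μ) = finrank k V := by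
  have := hf.finite_range hμ hμ0
  exact (hf.index_ker_mul_finrank_eigenspace_le hμ hμ0).antisymm
    (finrank_le_index_mul_finrank _ (hf.eigenspaceSubrep_ne_bot hμ))

theorem isAtom_eigenspaceSubrep (hf : IsTwistIntertwiner ρ f χ)
    (hμ : f.HasEigenvalue μ) (hμ0 : μ ≠ 0) : IsAtom (hf.eigenspaceSubrep μ) := by
  have := hf.finite_range hμ hμ0
  refine isAtom_iff_le_of_ge.mpr ⟨hf.eigenspaceSubrep_ne_bot hμ, fun U hU hle ↦ ?_⟩
  have finrank_le := finrank_le_index_mul_finrank U hU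
  rw [← hf.index_ker_mul_finrank_eigenspace hμ hμ0] at finrank_le
  exact (Submodule.eq_of_le_of_finrank_le hle (Nat.le_of_mul_le_mul_left finrank_le
    (Nat.pos_of_ne_zero Subgroup.FiniteIndex.index_ne_zero))).ge

end IsTwistIntertwiner

end TwistIntertwiner

theorem exists_notMem_forall_commutatorElement_mem {G : Type*} [Group G] [Group.IsNilpotent G]
    {Z : Subgroup G} (hZ : Z ≠ ⊤) : ∃ z ∉ Z, ∀ g, ⁅z, g⁆ ∈ Z := by
  by_contra! h
  have le (n : ℕ) : Subgroup.upperCentralSeries G n ≤ Z := by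
    induction n with
    | zero => simp
    | succ n ih =>
      intro z hz
      by_contra hzZ
      obtain ⟨g, hg⟩ := h z hzZ
      exact hg (ih (Subgroup.mem_upperCentralSeries_succ_iff.mp hz g))
  obtain ⟨n, hn⟩ := Group.IsNilpotent.nilpotent G
  exact hZ (top_le_iff.mp (hn ▸ le n))

section Monomial

variable {k G V : Type*} [Field k] [Group G] [AddCommGroup V] [Module k V]

/-- The center `Z(ρ)` of a representation: the subgroup of elements acting as scalars. -/
def repCenter (ρ : Representation k G V) : Subgroup G :=
  (Units.map (algebraMap k (End k V)).toMonoidHom).range.comap ρ.asGroupHom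

theorem mem_repCenter {ρ : Representation k G V} {g : G} :
    g ∈ repCenter ρ ↔ ∃ c : kˣ, ∀ v, ρ g v = (c : k) • v := by
  simp only [repCenter, Subgroup.mem_comap, MonoidHom.mem_range, Units.ext_iff, LinearMap.ext_iff]
  exact exists_congr fun c ↦ forall_congr' fun v ↦ eq_comm

theorem exists_isTwistIntertwiner {ρ : Representation k G V} [Nontrivial V] {z : G}
    (hz : ∀ g, ⁅z, g⁆ ∈ repCenter ρ) :
    ∃ χ : G →* kˣ, IsTwistIntertwiner ρ (ρ z) χ := by
  choose c hc using fun g ↦ mem_repCenter.mp (hz g)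
  have twist (g : G) (v : V) : ρ z (ρ g v) = (c g : k) • ρ g (ρ z v) := by
    rw [← hc]
    simp only [← End.mul_apply, ← map_mul, commutatorElement_def]
    congr 2
    group
  obtain ⟨v, hv⟩ := exists_ne (0 : V)
  have mul (g h : G) : (c (g * h) : k) • ρ (g * h) (ρ z v) =
      (c g * c h : k) • ρ (g * h) (ρ z v) := by
    rw [← twist, map_mul, End.mul_apply, twist, twist, map_smul, smul_smul, End.mul_apply]
  have ne_zero (g : G) : ρ g (ρ z v) ≠ 0 := by
    simpa only [ne_eq, map_eq_zero_iff _ (ρ.apply_bijective _).1] using hv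
  exact ⟨MonoidHom.mk' c fun g h ↦ Units.ext (smul_left_injective k (ne_zero _) (mul g h)), twist⟩

variable (ρ : Representation k G V)

/-- A representation is monomial if a subgroup `H` of index equal to its degree stabilizes a line.
An irreducible `ρ` of this kind is induced from the linear character of `H` afforded by the line,
since the translates of the line span the whole space. -/
def IsMonomial : Prop :=
  ∃ H : Subgroup G, H.index = finrank k V ∧ ∃ v ≠ 0, ∀ h ∈ H, ∃ c : k, ρ h v = c • v

variable {ρ} [ρ.IsIrreducible]

theorem isMonomial_of_repCenter_eq_top (h : repCenter ρ = ⊤) : IsMonomial ρ := by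
  have := nontrivial_of_isIrreducible ρ
  obtain ⟨v, hv⟩ := exists_ne (0 : V)
  have scalar (g : G) (w : V) : ∃ c : k, ρ g w = c • w := by
    obtain ⟨c, hc⟩ := mem_repCenter.mp (h ▸ Subgroup.mem_top g)
    exact ⟨c, hc w⟩
  let W : Subrepresentation ρ := ⟨k ∙ v, fun g w hw ↦ by
    obtain ⟨c, hc⟩ := scalar g w
    exact hc ▸ Submodule.smul_mem _ c hw⟩
  have span : k ∙ v = ⊤ := congrArg Subrepresentation.toSubmodule
    (eq_top_of_mem_of_ne_zero (W := W) (Submodule.mem_span_singleton_self v) hv)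
  refine ⟨⊤, ?_, v, hv, fun g _ ↦ scalar g v⟩
  rw [Subgroup.index_top, ← finrank_top, ← span, finrank_span_singleton hv]

theorem isMulCommutative_of_forall_exists_smul_eq {H : Subgroup G} [H.Normal]
    (hρ : Function.Injective ρ) {v : V} (hv : v ≠ 0) (hH : ∀ h ∈ H, ∃ c : k, ρ h v = c • v) :
    IsMulCommutative H := by
  let W : Subrepresentation ρ :=
    { toSubmodule := ⨅ (a : H) (b : H), (ρ (a * b)).eqLocus (ρ (b * a))
      apply_mem_toSubmodule g w hw := by
        simp only [Submodule.mem_iInf, LinearMap.mem_eqLocus] at hw ⊢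
        intro a b
        have conj (a b : H) : ρ (a * b) (ρ g w) =
            ρ g (ρ (MulAut.conjNormal g⁻¹ a * MulAut.conjNormal g⁻¹ b) w) := by
          simp only [← End.mul_apply, ← map_mul, MulAut.conjNormal_apply]
          congr 2
          group
        rw [conj, conj, hw] }
  have mem : v ∈ W := by
    refine (Submodule.mem_iInf _).mpr fun a ↦ (Submodule.mem_iInf _).mpr fun b ↦ ?_
    obtain ⟨c, hc⟩ := hH a a.2
    obtain ⟨d, hd⟩ := hH b b.2
    simp [hc, hd, smul_comm c d]
  have top := congrArg Subrepresentation.toSubmodule (eq_top_of_mem_of_ne_zero mem hv)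
  refine ⟨⟨fun a b ↦ Subtype.ext (hρ (LinearMap.ext fun w ↦ ?_))⟩⟩
  have hw : w ∈ W.toSubmodule := top ▸ Submodule.mem_top
  exact (Submodule.mem_iInf _).mp ((Submodule.mem_iInf _).mp hw a) b

theorem IsMonomial.of_eigenspaceSubrep [FiniteDimensional k V] {f : End k V} {χ : G →* kˣ} {μ : k}
    (hf : IsTwistIntertwiner ρ f χ) (hμ : f.HasEigenvalue μ) (hμ0 : μ ≠ 0)
    (h : IsMonomial (hf.eigenspaceSubrep μ).toRepresentation) : IsMonomial ρ := by
  obtain ⟨H, hH, v, hv, hHv⟩ := h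
  refine ⟨H.map χ.ker.subtype, ?_, v, by simpa using hv, ?_⟩
  · rw [Subgroup.index_map_subtype, hH, mul_comm]
    exact hf.index_ker_mul_finrank_eigenspace hμ hμ0
  · rintro _ ⟨h, hh, rfl⟩
    obtain ⟨c, hc⟩ := hHv h hh
    exact ⟨c, congrArg Subtype.val hc⟩

end Monomial

theorem isMonomial_of_isNilpotent {k : Type*} [Field k] [IsAlgClosed k] {G : Type*} [Group G]
    [Group.IsNilpotent G] {V : Type*} [AddCommGroup V] [Module k V] [FiniteDimensional k V]
    (ρ : Representation k G V) [ρ.IsIrreducible] : IsMonomial ρ := by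
  induction hd : finrank k V using Nat.strong_induction_on generalizing G V with
  | h d ih =>
  by_cases htop : repCenter ρ = ⊤
  · exact isMonomial_of_repCenter_eq_top htop
  have := nontrivial_of_isIrreducible ρ
  obtain ⟨z, hz, hcomm⟩ := exists_notMem_forall_commutatorElement_mem htop
  obtain ⟨χ, hχ⟩ := exists_isTwistIntertwiner hcomm
  obtain ⟨μ, hμ⟩ := End.exists_eigenvalue (ρ z)
  have hμ0 : μ ≠ 0 := by
    rintro rfl
    obtain ⟨v, hv, hv0⟩ := hμ.exists_hasEigenvector
    have : ρ z v = 0 := by rw [End.mem_eigenspace_iff.mp hv, zero_smul]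
    exact hv0 ((map_eq_zero_iff _ (ρ.apply_bijective z).1).mp this)
  have lt : finrank k (End.eigenspace (ρ z) μ) < d := by
    refine hd ▸ Submodule.finrank_lt fun h ↦ hz (mem_repCenter.mpr ⟨Units.mk0 μ hμ0, fun v ↦ ?_⟩)
    exact End.mem_eigenspace_iff.mp (h ▸ Submodule.mem_top)
  have := isIrreducible_of_isAtom (hχ.isAtom_eigenspaceSubrep hμ hμ0)
  exact .of_eigenspaceSubrep hχ hμ hμ0 (ih _ lt _ rfl)

section PGroup

variable {p : ℕ} [Fact p.Prime] {G : Type*} [Group G] [Finite G]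

theorem normal_of_index_eq_prime (hG : IsPGroup p G) {H : Subgroup G} (hH : H.index = p) :
    H.Normal := by
  have hp := Fact.out (p := p.Prime)
  obtain ⟨n, hn⟩ := IsPGroup.iff_card.mp hG
  have hn0 : n ≠ 0 := by
    rintro rfl
    exact hp.one_lt.ne' (Nat.dvd_one.mp (by simpa [hn, hH] using H.index_dvd_card))
  exact Subgroup.normal_of_index_eq_minFac_card (by rw [hH, hn, hp.pow_minFac hn0])

theorem exists_ne_one_mem_center_of_normal (hG : IsPGroup p G) {K : Subgroup G} [K.Normal]
    (hK : K ≠ ⊥) : ∃ z ∈ K, z ∈ Subgroup.center G ∧ z ≠ (1 : G) := by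
  let : MulAction G K := MulAction.compHom K (MulAut.conjNormal : G →* MulAut K)
  have smul_def (g : G) (x : K) : g • x = MulAut.conjNormal g x := rfl
  have dvd : p ∣ Nat.card K :=
    (hG.to_subgroup K).card_eq_or_dvd.resolve_left (mt Subgroup.card_eq_one.mp hK)
  obtain ⟨z, hz, hz1⟩ := hG.exists_fixed_point_of_prime_dvd_card_of_fixed_point K dvd
    (a := (1 : K)) fun g ↦ by rw [smul_def, map_one]
  refine ⟨z, z.2, Subgroup.mem_center_iff.mpr fun g ↦ ?_, fun h ↦ hz1 (Subtype.ext h.symm)⟩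
  have fixed := congrArg Subtype.val (hz g)
  rwa [smul_def, MulAut.conjNormal_apply, mul_inv_eq_iff_eq_mul] at fixed

theorem le_center_of_card_le (hG : IsPGroup p G) {K : Subgroup G} [K.Normal]
    (hK : Nat.card K ≤ p) : K ≤ Subgroup.center G := by
  by_cases hbot : K = ⊥
  · exact hbot ▸ bot_le
  obtain ⟨z, hzK, hz, hz1⟩ := exists_ne_one_mem_center_of_normal hG hbot
  have card : Nat.card K = p := hK.antisymm <| Nat.le_of_dvd Nat.card_pos <|
    (hG.to_subgroup K).card_eq_or_dvd.resolve_left (mt Subgroup.card_eq_one.mp hbot)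
  have := Fact.mk (card ▸ Fact.out : (Nat.card K).Prime)
  rw [← Subgroup.subgroupOf_eq_top]
  refine ((Subgroup.center G).subgroupOf K).eq_bot_or_eq_top_of_prime_card.resolve_left fun h ↦ ?_
  have mem : (⟨z, hzK⟩ : K) ∈ (Subgroup.center G).subgroupOf K := hz
  rw [h, Subgroup.mem_bot] at mem
  exact hz1 (Subtype.ext_iff.mp mem)

theorem isMulCommutative_of_card_ker_le (hG : IsPGroup p G) {R : Type*} [CommRing R] [IsDomain R]
    (χ : G →* Rˣ) (hχ : Nat.card χ.ker ≤ p) : IsMulCommutative G := by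
  have : Finite χ.range := Finite.of_surjective _ χ.rangeRestrict_surjective
  refine χ.rangeRestrict.isMulCommutative_of_isCyclic_of_ker_le_center ?_
  rw [MonoidHom.ker_rangeRestrict]
  exact le_center_of_card_le hG hχ

end PGroup

section PGroupRepresentation

variable {k G V : Type*} [Field k] [Group G] [Finite G] [AddCommGroup V] [Module k V]
  (ρ : Representation k G V) {p : ℕ} [Fact p.Prime]

theorem isMulCommutative_of_finrank_eq_one_of_card_ker_le (hG : IsPGroup p G)
    (hV : finrank k V = 1) (hker : Nat.card ρ.asGroupHom.ker ≤ p) : IsMulCommutative G := by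
  let χ : G →* kˣ := (Units.map LinearMap.det).comp ρ.asGroupHom
  have ker_le : χ.ker ≤ ρ.asGroupHom.ker := fun g hg ↦ by
    obtain ⟨c, hc⟩ := (LinearMap.existsUnique_eq_smul_id_of_finrank_eq_one hV (ρ g)).exists
    have det_eq : LinearMap.det (ρ g) = 1 := congrArg Units.val hg
    have hc1 : c = 1 := by simpa [hc, hV] using det_eq
    exact Units.ext (hc.trans (by rw [hc1, one_smul]; rfl))
  exact isMulCommutative_of_card_ker_le hG χ ((Subgroup.card_le_of_le ker_le).trans hker)

variable [IsAlgClosed k] [FiniteDimensional k V]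

theorem exists_finrank_eq_prime_pow [ρ.IsIrreducible] (hG : IsPGroup p G) :
    ∃ m, finrank k V = p ^ m := by
  have := hG.isNilpotent
  obtain ⟨H, hH, -⟩ := isMonomial_of_isNilpotent ρ
  exact hH ▸ hG.index H

theorem exists_isMulCommutative_index_eq [ρ.IsIrreducible] (hG : IsPGroup p G)
    (hρ : Function.Injective ρ) (hV : finrank k V = p) :
    ∃ A : Subgroup G, IsMulCommutative A ∧ A.index = p := by
  have := hG.isNilpotent
  obtain ⟨H, hH, v, hv, hHv⟩ := isMonomial_of_isNilpotent ρ
  have := normal_of_index_eq_prime hG (hH.trans hV)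
  exact ⟨H, isMulCommutative_of_forall_exists_smul_eq hρ hv hHv, hH.trans hV⟩

end PGroupRepresentation

section Codegree

variable {G : Type} [Group G]

instance isIrreducible_of_simple_s18 (V : FDRep ℂ G) [Simple V] :
    Representation.IsIrreducible V.ρ where
  exists_pair_ne := by
    have : Nontrivial V := by
      by_contra h
      rw [not_nontrivial_iff_subsingleton] at h
      exact id_nonzero V (by ext v; exact Subsingleton.elim (α := V) _ _)
    obtain ⟨v, hv⟩ := exists_ne (0 : V)
    exact ⟨⊤, ⊥, subrepresentation_ne_bot_iff.mpr ⟨v, trivial, hv⟩⟩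
  eq_bot_or_eq_top W := by
    let f : FDRep.of W.toRepresentation ⟶ V :=
      { hom := FGModuleCat.ofHom W.toSubmodule.subtype
        comm := fun g ↦ by ext v; rfl }
    have : Mono f := ConcreteCategory.mono_of_injective f Subtype.val_injective
    refine or_iff_not_imp_left.mpr fun hW ↦ top_le_iff.mp fun v _ ↦ ?_
    obtain ⟨w, hw, hw0⟩ := subrepresentation_ne_bot_iff.mp hW
    have hf : f ≠ 0 := fun h ↦ hw0 (by
      have : f ⟨w, hw⟩ = 0 := by rw [h]; rfl
      exact this)
    have := isIso_of_mono_of_nonzero hf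
    obtain ⟨u, rfl⟩ := (ConcreteCategory.bijective_of_isIso f).2 v
    exact u.2

theorem card_repKer_mul_repDegree_lt {V : FDRep ℂ G} {c : ℕ}
    (h : Nat.card G < c * codegree V) : Nat.card (repKer V) * repDegree V < c := by
  have degree_pos : 0 < repDegree V := by
    refine Nat.pos_of_ne_zero fun h0 ↦ ?_
    simp [codegree, h0] at h
  refine Nat.lt_of_mul_lt_mul_right (a := (repKer V).index) ?_
  calc Nat.card (repKer V) * repDegree V * (repKer V).index
      = Nat.card G * repDegree V := by rw [mul_right_comm, Subgroup.card_mul_index]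
    _ < c * codegree V * repDegree V := Nat.mul_lt_mul_of_pos_right h degree_pos
    _ ≤ c * (repKer V).index := by
      rw [mul_assoc]
      exact Nat.mul_le_mul_left c (Nat.div_mul_le_self _ _)

theorem one_mem_cdSet [Finite G] : 1 ∈ cdSet G := by
  have := Fintype.ofFinite G
  refine ⟨FDRep.of (Representation.trivial ℂ G ℂ), ?_, Module.finrank_self ℂ⟩
  rw [FDRep.simple_iff_char_is_norm_one]
  simp [FDRep.character]

variable {p : ℕ} [Fact p.Prime] [Finite G]

theorem cdSet_eq_of_isMulCommutative_index_eq (hG : IsPGroup p G) {A : Subgroup G}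
    [IsMulCommutative A] (hA : A.index = p) (hp : p ∈ cdSet G) : cdSet G = {1, p} := by
  refine Set.Subset.antisymm ?_ (Set.insert_subset one_mem_cdSet (Set.singleton_subset_iff.mpr hp))
  rintro _ ⟨W, hW, rfl⟩
  obtain ⟨m, hm⟩ := exists_finrank_eq_prime_pow W.ρ hG
  have finrank_le := finrank_le_index_of_isMulCommutative W.ρ A
  rw [hA, hm] at finrank_le
  have hm1 : m ≤ 1 :=
    (Nat.pow_le_pow_iff_right (Fact.out : p.Prime).one_lt).mp (by simpa using finrank_le)
  change finrank ℂ W = 1 ∨ finrank ℂ W = p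
  rw [hm]
  interval_cases m <;> simp

theorem repKer_eq_bot_and_repDegree_eq_of_card_lt (hG : IsPGroup p G)
    (hnc : ¬ IsMulCommutative G) (V : FDRep ℂ G) [Simple V]
    (hV : Nat.card G < p ^ 2 * codegree V) :
    repKer V = ⊥ ∧ repDegree V = p := by
  have hp := Fact.out (p := p.Prime)
  obtain ⟨m, hm⟩ := exists_finrank_eq_prime_pow V.ρ hG
  obtain ⟨j, hj⟩ := IsPGroup.iff_card.mp (hG.to_subgroup (repKer V))
  have lt := card_repKer_mul_repDegree_lt hV
  rw [hj, show repDegree V = p ^ m from hm, ← pow_add, Nat.pow_lt_pow_iff_right hp.one_lt] at lt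
  have hm0 : m ≠ 0 := by
    rintro rfl
    refine hnc (isMulCommutative_of_finrank_eq_one_of_card_ker_le V.ρ hG (by simpa using hm) ?_)
    exact hj.trans_le (Nat.pow_le_pow_right hp.pos (by omega) |>.trans_eq (pow_one p))
  obtain ⟨rfl, rfl⟩ : j = 0 ∧ m = 1 := by omega
  exact ⟨Subgroup.card_eq_one.mp (by simpa using hj), hm.trans (pow_one p)⟩

theorem cdSet_eq_of_card_lt_sq_mul_codegree (hG : IsPGroup p G) (hnc : ¬ IsMulCommutative G)
    (V : FDRep ℂ G) [Simple V] (hV : Nat.card G < p ^ 2 * codegree V) : cdSet G = {1, p} := by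
  obtain ⟨hker, hdeg⟩ := repKer_eq_bot_and_repDegree_eq_of_card_lt hG hnc V hV
  have hρ : Function.Injective V.ρ := fun g h e ↦
    (MonoidHom.ker_eq_bot_iff _).mp hker (Units.ext e)
  obtain ⟨A, _, hA⟩ := exists_isMulCommutative_index_eq V.ρ hG hρ hdeg
  exact cdSet_eq_of_isMulCommutative_index_eq hG hA ⟨V, ‹Simple V›, hdeg⟩

theorem nilClass_le_one_of_isMulCommutative {G : Type} [Group G] [IsMulCommutative G] :
    nilClass G ≤ 1 :=
  Nat.sInf_le ((Subgroup.upperCentralSeries_one G).trans Subgroup.center_eq_top)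

end Codegree

theorem maximal_class_top_codegree_general (p n : ℕ) (hp : p.Prime) (G : Type) [Group G]
    [Fintype G] (hcard : Fintype.card G = p ^ n) (hG : ¬ IsMulCommutative G) :
    (p ^ (n - 1) ∈ codSet G → cdSet G = {1, p}) ∧
      (cdSet G ≠ {1, p} → ∀ V : FDRep ℂ G, Simple V → codegree V ≤ p ^ (n - 2)) := by
  have := Fact.mk hp
  have hcard' : Nat.card G = p ^ n := Nat.card_eq_fintype_card.trans hcard
  have hpG : IsPGroup p G := IsPGroup.of_card hcard'
  refine ⟨?_, fun hcd V hV ↦ ?_⟩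
  · rintro ⟨V, hV, hcod⟩
    refine cdSet_eq_of_card_lt_sq_mul_codegree hpG hG V ?_
    rw [hcard', hcod, ← pow_add]
    exact Nat.pow_lt_pow_right hp.one_lt (by omega)
  · contrapose! hcd
    refine cdSet_eq_of_card_lt_sq_mul_codegree hpG hG V ?_
    calc Nat.card G = p ^ n := hcard'
      _ ≤ p ^ 2 * p ^ (n - 2) := by
        rw [← pow_add]; exact Nat.pow_le_pow_right hp.pos (by omega)
      _ < p ^ 2 * codegree V := Nat.mul_lt_mul_of_pos_left hcd (pow_pos hp.pos 2)

/-- For a maximal class `p`-group of order `p^n ≥ p^3`: if `p^{n-1} ∈ cod(G)` then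
`cd(G) = {1, p}`; equivalently, if `cd(G) ≠ {1, p}` then every irreducible character has
codegree at most `p^{n-2}`. -/
theorem maximal_class_top_codegree (p n : ℕ) (hp : p.Prime) (G : Type) [Group G] [Fintype G]
    (hcard : Fintype.card G = p ^ n) (hn : 3 ≤ n) (hmax : nilClass G = n - 1) :
    (p ^ (n - 1) ∈ codSet G → cdSet G = {1, p}) ∧
      (cdSet G ≠ {1, p} → ∀ V : FDRep ℂ G, Simple V → codegree V ≤ p ^ (n - 2)) := by
  refine maximal_class_top_codegree_general p n hp G hcard fun _ ↦ ?_
  have := nilClass_le_one_of_isMulCommutative (G := G)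
  omega
end
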